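/- Let W be a Weyl field on ℝ⁴ (a smooth map assigning to each point a Weyl tensor and satisfying the vacuum Bianchi equations Σ_{α,μ} η^{αμ} ∂_μ W_{αβγδ} = 0 and ∂_λ W_{αβγδ} + ∂_α W_{βλγδ} + ∂_β W_{λαγδ} = 0), and suppose that for each t ∈ ℝ the map x ↦ W(t,x) has compact support in ℝ³. Then the total Bel-Robinson energy ℰ(t) := ∫_{ℝ³} Q_{0000}(t,x) dx is independent of t, where Q is the Bel-Robinson tensor field of W. -/

import Mathlib

/-- The Minkowski metric `η` on `ℝ⁴` (and its inverse, which has the same components):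
`η_{00} = -1`, `η_{11} = η_{22} = η_{33} = 1`, off-diagonal components zero. -/
noncomputable def eta (μ ν : Fin 4) : ℝ :=
  if μ = ν then (if μ = 0 then -1 else 1) else 0

/-- The Levi-Civita symbol on four indices, totally antisymmetric with `ε_{0123} = 1`. -/
noncomputable def eps4 (i j k l : Fin 4) : ℝ :=
  ((((j : ℕ) : ℝ) - ((i : ℕ) : ℝ)) * (((k : ℕ) : ℝ) - ((i : ℕ) : ℝ)) *
    (((l : ℕ) : ℝ) - ((i : ℕ) : ℝ)) * (((k : ℕ) : ℝ) - ((j : ℕ) : ℝ)) *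
    (((l : ℕ) : ℝ) - ((j : ℕ) : ℝ)) * (((l : ℕ) : ℝ) - ((k : ℕ) : ℝ))) / 12

/-- A Weyl tensor on `(ℝ⁴, η)`: antisymmetric in the first and last pairs of indices,
symmetric under exchange of the pairs, satisfying the first Bianchi identity, and
trace-free. -/
def IsWeylTensor (W : Fin 4 → Fin 4 → Fin 4 → Fin 4 → ℝ) : Prop :=
  (∀ α β γ δ, W α β γ δ = -W β α γ δ) ∧
  (∀ α β γ δ, W α β γ δ = -W α β δ γ) ∧
  (∀ α β γ δ, W α β γ δ = W γ δ α β) ∧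
  (∀ α β γ δ, W α β γ δ + W α γ δ β + W α δ β γ = 0) ∧
  (∀ α β, ∑ μ, ∑ ν, eta μ ν * W μ α ν β = 0)

/-- The Hodge dual `(*W)_{αβγδ} = (1/2) Σ η^{ρμ} η^{σν} ε_{αβρσ} W_{μνγδ}`. -/
noncomputable def hodge (W : Fin 4 → Fin 4 → Fin 4 → Fin 4 → ℝ)
    (α β γ δ : Fin 4) : ℝ :=
  (1 / 2) * ∑ μ, ∑ ν, ∑ ρ, ∑ σ, eta ρ μ * eta σ ν * eps4 α β ρ σ * W μ ν γ δ

/-- The Bel-Robinson tensor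
`Q_{αβγδ} = Σ η^{μρ} η^{νσ} (W_{αμβν} W_{γρδσ} + (*W)_{αμβν} (*W)_{γρδσ})`. -/
noncomputable def belRobinson (W : Fin 4 → Fin 4 → Fin 4 → Fin 4 → ℝ)
    (α β γ δ : Fin 4) : ℝ :=
  ∑ μ, ∑ ν, ∑ ρ, ∑ σ, eta μ ρ * eta ν σ *
    (W α μ β ν * W γ ρ δ σ + hodge W α μ β ν * hodge W γ ρ δ σ)

open MeasureTheory

/-- The partial derivative `∂_μ f` on `ℝ⁴`. -/
noncomputable def pd4 (f : (Fin 4 → ℝ) → ℝ) (μ : Fin 4) (p : Fin 4 → ℝ) : ℝ :=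
  fderiv ℝ f p (Pi.single μ 1)

/-!
With its last two indices fixed as `0 k`, a Weyl field is a `2`-form `W_{··0k}` satisfying
Maxwell's equations, and `Q_{0000}` is the sum over `k` of the electromagnetic energy densities of
these three `2`-forms. So it suffices to conserve the energy of a Maxwell field, that is, the charge
of its energy current `J`, which is divergence-free and has spatial part bounded by a multiple of
`J₀`.

The slices have compact support, but not uniformly in time, so the divergence theorem cannot be
applied to `J` on a box directly. Instead `J` is multiplied by a cutoff `φ` that equals `1` on the
support of both slices, and whose level sets move inwards so fast that `div (φ J) = dφ(J) ≤ 0`.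
This bounds the later charge by the earlier one; a cutoff moving outwards gives the converse.
-/

/-- The partial derivative `∂_i f` on `ℝᵐ`; for `m = 4` this is `pd4`. -/
noncomputable def partialDeriv {m : ℕ} (f : (Fin m → ℝ) → ℝ) (i : Fin m) (p : Fin m → ℝ) : ℝ :=
  fderiv ℝ f p (Pi.single i 1)

/-- The divergence `∑ i, ∂_i V_i` of a vector field on `ℝᵐ`. -/
noncomputable def divergence {m : ℕ} (V : (Fin m → ℝ) → Fin m → ℝ) (p : Fin m → ℝ) : ℝ :=
  ∑ i, partialDeriv (fun q => V q i) i p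

section PartialDeriv

variable {m : ℕ} {f g : (Fin m → ℝ) → ℝ} {p : Fin m → ℝ} {i : Fin m}

theorem partialDeriv_mul (hf : DifferentiableAt ℝ f p) (hg : DifferentiableAt ℝ g p) :
    partialDeriv (fun q => f q * g q) i p =
      f p * partialDeriv g i p + partialDeriv f i p * g p := by
  simp [partialDeriv, fderiv_fun_mul hf hg, mul_comm (g p)]

theorem partialDeriv_add (hf : DifferentiableAt ℝ f p) (hg : DifferentiableAt ℝ g p) :
    partialDeriv (fun q => f q + g q) i p = partialDeriv f i p + partialDeriv g i p := by
  simp [partialDeriv, fderiv_fun_add hf hg]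

theorem partialDeriv_const_mul (c : ℝ) (hf : DifferentiableAt ℝ f p) :
    partialDeriv (fun q => c * f q) i p = c * partialDeriv f i p := by
  simp [partialDeriv, fderiv_const_mul hf]

theorem partialDeriv_neg : partialDeriv (fun q => -f q) i p = -partialDeriv f i p := by
  simp [partialDeriv]

theorem partialDeriv_sum {ι : Type*} {s : Finset ι} {F : ι → (Fin m → ℝ) → ℝ}
    (hF : ∀ k ∈ s, DifferentiableAt ℝ (F k) p) :
    partialDeriv (fun q => ∑ k ∈ s, F k q) i p = ∑ k ∈ s, partialDeriv (F k) i p := by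
  simp [partialDeriv, fderiv_fun_sum hF]

theorem partialDeriv_sum_mul {ι : Type*} {s : Finset ι} {F G : ι → (Fin m → ℝ) → ℝ}
    (hF : ∀ k ∈ s, DifferentiableAt ℝ (F k) p) (hG : ∀ k ∈ s, DifferentiableAt ℝ (G k) p) :
    partialDeriv (fun q => ∑ k ∈ s, F k q * G k q) i p =
      ∑ k ∈ s, (F k p * partialDeriv (G k) i p + partialDeriv (F k) i p * G k p) := by
  rw [partialDeriv_sum fun k hk => (hF k hk).fun_mul (hG k hk)]
  exact Finset.sum_congr rfl fun k hk => partialDeriv_mul (hF k hk) (hG k hk)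

theorem partialDeriv_sum_sq {ι : Type*} {s : Finset ι} {F : ι → (Fin m → ℝ) → ℝ}
    (hF : ∀ k ∈ s, DifferentiableAt ℝ (F k) p) :
    partialDeriv (fun q => ∑ k ∈ s, F k q ^ 2) i p =
      2 * ∑ k ∈ s, F k p * partialDeriv (F k) i p := by
  simp only [sq, partialDeriv_sum_mul hF hF, Finset.mul_sum]
  exact Finset.sum_congr rfl fun k _ => by ring

theorem sum_partialDeriv_mul (f : (Fin m → ℝ) → ℝ) (p v : Fin m → ℝ) :
    ∑ i, partialDeriv f i p * v i = fderiv ℝ f p v := by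
  conv_rhs => rw [pi_eq_sum_univ' v, map_sum]
  simp only [partialDeriv, map_smul, smul_eq_mul, mul_comm]

theorem divergence_smul {V : (Fin m → ℝ) → Fin m → ℝ} (hf : DifferentiableAt ℝ f p)
    (hV : DifferentiableAt ℝ V p) :
    divergence (fun q => f q • V q) p = f p * divergence V p + fderiv ℝ f p (V p) := by
  simp only [divergence, Pi.smul_apply, smul_eq_mul,
    partialDeriv_mul hf (differentiableAt_pi.1 hV _), Finset.sum_add_distrib, ← Finset.mul_sum,
    sum_partialDeriv_mul]

theorem divergence_neg (V : (Fin m → ℝ) → Fin m → ℝ) (p : Fin m → ℝ) :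
    divergence (fun q => -V q) p = -divergence V p := by
  simp [divergence, partialDeriv_neg]

end PartialDeriv

section CausalCurrent

open Set Filter

variable {n : ℕ} {t₀ t₁ : ℝ}

theorem integral_slice_le_of_divergence_nonpos {V : (Fin (n + 1) → ℝ) → Fin (n + 1) → ℝ} {L : ℝ}
    (hV : ContDiff ℝ 1 V) (hdiv : ∀ p, divergence V p ≤ 0) (ht : t₀ ≤ t₁) (hL : 0 ≤ L)
    (hzero : ∀ p, p 0 ∈ Icc t₀ t₁ → ∀ i : Fin n, L ≤ |p i.succ| → V p = 0) :
    ∫ x : Fin n → ℝ, V (Fin.cons t₁ x) 0 ≤ ∫ x : Fin n → ℝ, V (Fin.cons t₀ x) 0 := by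
  let a : Fin (n + 1) → ℝ := Fin.cons t₀ fun _ => -L
  let b : Fin (n + 1) → ℝ := Fin.cons t₁ fun _ => L
  have hab : a ≤ b := Fin.cons_le_cons.2 ⟨ht, fun _ => neg_le_self hL⟩
  have hVi (i) : ContDiff ℝ 1 fun p => V p i := contDiff_pi.1 hV i
  have gauss := integral_divergence_of_hasFDerivAt_off_countable' a b hab
    (fun i p => V p i) (fun i => fderiv ℝ fun p => V p i) ∅ countable_empty
    (fun i => (hVi i).continuous.continuousOn)
    (fun p _ i => ((hVi i).differentiable one_ne_zero p).hasFDerivAt)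
    (continuous_finsetSum _ fun i _ => ((hVi i).continuous_fderiv one_ne_zero).clm_apply
      continuous_const).integrableOn_Icc
  have lateral (j : Fin n) (r : ℝ) (hr : |r| = L) :
      ∫ x in Icc (a ∘ j.succ.succAbove) (b ∘ j.succ.succAbove),
        V (j.succ.insertNth r x) j.succ = 0 := by
    cases n with
    | zero => exact j.elim0
    | succ n =>
      refine setIntegral_eq_zero_of_forall_eq_zero fun x hx => ?_
      have h0 : (j.succ.insertNth r x : Fin (n + 2) → ℝ) 0 = x 0 := by
        rw [← Fin.succ_succAbove_zero j, Fin.insertNth_apply_succAbove]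
      rw [hzero _ ?_ j (by simp [hr]), Pi.zero_apply]
      simpa [h0, a, b] using And.intro (hx.1 0) (hx.2 0)
  have slice (t : ℝ) (h : t ∈ Icc t₀ t₁) :
      ∫ x in Icc (a ∘ Fin.succAbove 0) (b ∘ Fin.succAbove 0),
        V ((0 : Fin (n + 1)).insertNth t x) 0 = ∫ x : Fin n → ℝ, V (Fin.cons t x) 0 := by
    simp only [Fin.insertNth_zero']
    refine setIntegral_eq_integral_of_forall_compl_eq_zero fun x hx => ?_
    obtain ⟨j, hj⟩ : ∃ j, L ≤ |x j| := by
      contrapose! hx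
      exact ⟨fun j => (abs_lt.1 (hx j)).1.le, fun j => (abs_lt.1 (hx j)).2.le⟩
    rw [hzero _ (by simpa using h) j (by simpa using hj), Pi.zero_apply]
  have hbulk : ∫ p in Icc a b, ∑ i, fderiv ℝ (fun q => V q i) p (Pi.single i 1) ≤ 0 :=
    integral_nonpos hdiv
  rw [gauss, Fin.sum_univ_succ, Finset.sum_eq_zero fun j _ => ?_, add_zero] at hbulk
  · rw [← slice t₁ (right_mem_Icc.2 ht), ← slice t₀ (left_mem_Icc.2 ht)]
    exact sub_nonpos.1 hbulk
  · rw [lateral j _ (by simp [b, abs_of_nonneg hL]), lateral j _ (by simp [a, abs_of_nonneg hL]),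
      sub_zero]

/-- The function `ρ - c t - √(1 + |x|²)` of `p = (t, x)`. Its superlevel sets are smoothed spatial
balls that shrink at speed `c`; the `1` under the root removes the singularity at `x = 0`. -/
noncomputable def conePhase (c ρ : ℝ) (p : Fin (n + 1) → ℝ) : ℝ :=
  ρ - c * p 0 - √(1 + ∑ i : Fin n, p i.succ ^ 2)

/-- The smooth cutoff to the shrinking balls of `conePhase`, used as a weight in energy
estimates. -/
noncomputable def coneCutoff (c ρ : ℝ) (p : Fin (n + 1) → ℝ) : ℝ :=
  Real.smoothTransition (conePhase c ρ p)

theorem abs_le_sqrt_one_add_sum_sq (x : Fin n → ℝ) (i : Fin n) : |x i| ≤ √(1 + ∑ j, x j ^ 2) :=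
  Real.abs_le_sqrt <| (Finset.single_le_sum (fun j _ => sq_nonneg (x j)) (Finset.mem_univ i)).trans
    (by linarith)

theorem contDiff_conePhase {k : WithTop ℕ∞} (c ρ : ℝ) :
    ContDiff ℝ k (conePhase (n := n) c ρ) := by
  unfold conePhase
  refine .sub (by fun_prop) (.sqrt (by fun_prop) fun p => ?_)
  positivity

theorem fderiv_conePhase (c ρ : ℝ) (p v : Fin (n + 1) → ℝ) :
    fderiv ℝ (conePhase c ρ) p v =
      -(c * v 0) - (∑ i : Fin n, p i.succ * v i.succ) / √(1 + ∑ i : Fin n, p i.succ ^ 2) := by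
  have hcoord (i : Fin (n + 1)) : HasFDerivAt (fun q : Fin (n + 1) → ℝ => q i)
      (ContinuousLinearMap.proj (R := ℝ) (φ := fun _ => ℝ) i) p := hasFDerivAt_apply i p
  have hpos : 1 + ∑ i : Fin n, p i.succ ^ 2 ≠ 0 := by positivity
  have hsqrt := ((HasFDerivAt.fun_sum (u := Finset.univ) fun (i : Fin n) _ =>
    (hcoord i.succ).pow 2).const_add 1).sqrt hpos
  have h : fderiv ℝ (conePhase c ρ) p = _ :=
    ((((hcoord 0).const_mul c).const_sub ρ).sub hsqrt).fderiv
  rw [h]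
  simp only [sub_apply, neg_apply, smul_apply, sum_apply, ContinuousLinearMap.proj_apply,
    smul_eq_mul, nsmul_eq_mul, Finset.mul_sum, Finset.sum_div]
  congr 1
  refine Finset.sum_congr rfl fun i _ => ?_
  ring

theorem fderiv_conePhase_nonpos {c : ℝ} (ρ : ℝ) (p : Fin (n + 1) → ℝ) {v : Fin (n + 1) → ℝ}
    (hv : ∑ i : Fin n, |v i.succ| ≤ c * v 0) : fderiv ℝ (conePhase c ρ) p v ≤ 0 := by
  have hpos : 0 < √(1 + ∑ i : Fin n, p i.succ ^ 2) := by positivity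
  have hspatial : -(∑ i : Fin n, p i.succ * v i.succ) ≤
      (∑ i : Fin n, |v i.succ|) * √(1 + ∑ i : Fin n, p i.succ ^ 2) := by
    rw [← Finset.sum_neg_distrib, Finset.sum_mul]
    refine Finset.sum_le_sum fun i _ => (neg_le_abs _).trans ?_
    rw [abs_mul, mul_comm]
    gcongr
    exact abs_le_sqrt_one_add_sum_sq (fun j => p j.succ) i
  rw [← div_le_iff₀ hpos, neg_div] at hspatial
  rw [fderiv_conePhase]
  linarith

theorem contDiff_coneCutoff {k : ℕ∞} (c ρ : ℝ) : ContDiff ℝ k (coneCutoff (n := n) c ρ) :=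
  Real.smoothTransition.contDiff.comp (contDiff_conePhase c ρ)

theorem fderiv_coneCutoff_nonpos {c : ℝ} (ρ : ℝ) (p : Fin (n + 1) → ℝ) {v : Fin (n + 1) → ℝ}
    (hv : ∑ i : Fin n, |v i.succ| ≤ c * v 0) : fderiv ℝ (coneCutoff c ρ) p v ≤ 0 := by
  have htransition : DifferentiableAt ℝ Real.smoothTransition (conePhase c ρ p) :=
    (Real.smoothTransition.contDiff (n := 1)).differentiable one_ne_zero _
  have hphase : DifferentiableAt ℝ (conePhase c ρ) p :=
    (contDiff_conePhase (k := 1) c ρ).differentiable one_ne_zero p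
  have h : fderiv ℝ (coneCutoff c ρ) p = _ :=
    (htransition.hasDerivAt.comp_hasFDerivAt p hphase.hasFDerivAt).fderiv
  rw [h]
  exact mul_nonpos_of_nonneg_of_nonpos Real.smoothTransition.monotone.deriv_nonneg
    (fderiv_conePhase_nonpos ρ p hv)

theorem coneCutoff_eq_zero {c ρ : ℝ} {p : Fin (n + 1) → ℝ} {i : Fin n}
    (h : ρ - c * p 0 ≤ |p i.succ|) : coneCutoff c ρ p = 0 :=
  Real.smoothTransition.zero_of_nonpos <| sub_nonpos.2 <|
    h.trans (abs_le_sqrt_one_add_sum_sq (fun j => p j.succ) i)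

theorem exists_coneCutoff_eq_zero_of_le_abs (c ρ t₀ t₁ : ℝ) :
    ∃ L, 0 ≤ L ∧ ∀ p : Fin (n + 1) → ℝ, p 0 ∈ Icc t₀ t₁ → ∀ i : Fin n, L ≤ |p i.succ| →
      coneCutoff c ρ p = 0 := by
  refine ⟨|ρ| + |c| * max |t₀| |t₁|, by positivity, fun p hp i hi =>
    coneCutoff_eq_zero (i := i) ?_⟩
  calc ρ - c * p 0 ≤ |ρ| + |c * p 0| := (le_abs_self _).trans (abs_sub _ _)
    _ ≤ |ρ| + |c| * max |t₀| |t₁| := by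
      rw [abs_mul]
      gcongr
      exact abs_le_max_abs_abs hp.1 hp.2
    _ ≤ |p i.succ| := hi

theorem eventually_coneCutoff_eq_one (c : ℝ) {K : Set (Fin (n + 1) → ℝ)} (hK : IsCompact K) :
    ∀ᶠ ρ in atTop, ∀ p ∈ K, coneCutoff c ρ p = 1 := by
  obtain ⟨R, hR⟩ := hK.bddBelow_image (contDiff_conePhase (k := 0) c 0).continuous.continuousOn
  filter_upwards [eventually_ge_atTop (1 - R)] with ρ hρ p hp
  have := hR (mem_image_of_mem _ hp)
  refine Real.smoothTransition.one_of_one_le ?_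
  simp only [conePhase] at this ⊢
  linarith

theorem eventually_coneCutoff_mul_eq (c : ℝ) {f : (Fin (n + 1) → ℝ) → ℝ} {t : ℝ}
    (hf : HasCompactSupport fun x : Fin n → ℝ => f (Fin.cons t x)) :
    ∀ᶠ ρ in atTop, ∀ x : Fin n → ℝ,
      coneCutoff c ρ (Fin.cons t x) * f (Fin.cons t x) = f (Fin.cons t x) := by
  have hcons : Continuous fun x : Fin n → ℝ => (Fin.cons t x : Fin (n + 1) → ℝ) := by fun_prop
  filter_upwards [eventually_coneCutoff_eq_one c (hf.isCompact.image hcons)] with ρ hρ x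
  by_cases hx : f (Fin.cons t x) = 0
  · rw [hx, mul_zero]
  · rw [hρ _ (mem_image_of_mem _ (subset_tsupport _ hx)), one_mul]

variable {J : (Fin (n + 1) → ℝ) → Fin (n + 1) → ℝ} {c : ℝ}

theorem integral_slice_le_of_causal (hJ : ContDiff ℝ 1 J) (hdiv : ∀ p, divergence J p = 0)
    (hcausal : ∀ p, ∑ i : Fin n, |J p i.succ| ≤ c * J p 0) (ht : t₀ ≤ t₁)
    (hs₀ : HasCompactSupport fun x : Fin n → ℝ => J (Fin.cons t₀ x) 0)
    (hs₁ : HasCompactSupport fun x : Fin n → ℝ => J (Fin.cons t₁ x) 0) :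
    ∫ x : Fin n → ℝ, J (Fin.cons t₁ x) 0 ≤ ∫ x : Fin n → ℝ, J (Fin.cons t₀ x) 0 := by
  obtain ⟨ρ, h₀, h₁⟩ :=
    ((eventually_coneCutoff_mul_eq c (f := fun p => J p 0) hs₀).and
      (eventually_coneCutoff_mul_eq c (f := fun p => J p 0) hs₁)).exists
  obtain ⟨L, hL, hzero⟩ := exists_coneCutoff_eq_zero_of_le_abs (n := n) c ρ t₀ t₁
  have hφ : ContDiff ℝ 1 (coneCutoff (n := n) c ρ) := contDiff_coneCutoff c ρ
  have hdiv_nonpos (p) : divergence (fun q => coneCutoff c ρ q • J q) p ≤ 0 := by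
    rw [divergence_smul (hφ.differentiable one_ne_zero p) (hJ.differentiable one_ne_zero p),
      hdiv, mul_zero, zero_add]
    exact fderiv_coneCutoff_nonpos ρ p (hcausal p)
  have := integral_slice_le_of_divergence_nonpos (V := fun p => coneCutoff c ρ p • J p)
    (hφ.smul hJ) hdiv_nonpos ht hL
    fun p hp i hi => by rw [hzero p hp i hi, zero_smul]
  simpa only [Pi.smul_apply, smul_eq_mul, h₀, h₁] using this

theorem integral_slice_eq_of_causal (hJ : ContDiff ℝ 1 J) (hdiv : ∀ p, divergence J p = 0)
    (hcausal : ∀ p, ∑ i : Fin n, |J p i.succ| ≤ c * J p 0)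
    (hs₀ : HasCompactSupport fun x : Fin n → ℝ => J (Fin.cons t₀ x) 0)
    (hs₁ : HasCompactSupport fun x : Fin n → ℝ => J (Fin.cons t₁ x) 0) :
    ∫ x : Fin n → ℝ, J (Fin.cons t₀ x) 0 = ∫ x : Fin n → ℝ, J (Fin.cons t₁ x) 0 := by
  wlog ht : t₀ ≤ t₁ generalizing t₀ t₁
  · exact (this hs₁ hs₀ (le_of_not_ge ht)).symm
  refine le_antisymm ?_ (integral_slice_le_of_causal hJ hdiv hcausal ht hs₀ hs₁)
  -- The hypotheses are invariant under `(J, c) ↦ (-J, -c)`, which reverses the inequality.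
  have := integral_slice_le_of_causal (J := fun p => -J p) (c := -c) hJ.neg
    (fun p => by rw [divergence_neg, hdiv, neg_zero]) (by simpa using hcausal) ht hs₀.neg hs₁.neg
  simpa [integral_neg] using this

end CausalCurrent

section Maxwell

variable {n : ℕ}

/-- The evolution part of Maxwell's equations on `ℝ^{1+n}` for the `2`-form `F` with electric part
`E i = F_{0i}` and magnetic part `B i j = F_{ij}`. The constraint equations are not part of it. -/
structure IsMaxwellSolution (E : (Fin (n + 1) → ℝ) → Fin n → ℝ)
    (B : (Fin (n + 1) → ℝ) → Fin n → Fin n → ℝ) : Prop where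
  contDiff_electric : ContDiff ℝ 1 E
  contDiff_magnetic : ContDiff ℝ 1 B
  antisymm : ∀ p i j, B p i j = -B p j i
  ampere : ∀ p i, partialDeriv (fun q => E q i) 0 p =
    ∑ j : Fin n, partialDeriv (fun q => B q j i) j.succ p
  faraday : ∀ p i j, partialDeriv (fun q => B q i j) 0 p =
    partialDeriv (fun q => E q j) i.succ p - partialDeriv (fun q => E q i) j.succ p

/-- The energy density `|E|² + |B|²` of the electromagnetic field; the factor `1/2` compensates for
each component of the `2`-form `B` being counted twice. -/
noncomputable def energyDensity (E : Fin n → ℝ) (B : Fin n → Fin n → ℝ) : ℝ :=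
  ∑ i, E i ^ 2 + 1 / 2 * ∑ i, ∑ j, B i j ^ 2

/-- The energy current of the electromagnetic field: the energy density followed by the Poynting
vector. -/
noncomputable def energyCurrent (E : Fin n → ℝ) (B : Fin n → Fin n → ℝ) : Fin (n + 1) → ℝ :=
  Fin.cons (energyDensity E B) fun j => -2 * ∑ i, E i * B j i

theorem sum_abs_energyCurrent_succ_le (E : Fin n → ℝ) (B : Fin n → Fin n → ℝ) :
    ∑ j : Fin n, |energyCurrent E B j.succ| ≤ (n + 2) * energyCurrent E B 0 := by
  have hflux (j : Fin n) : |energyCurrent E B j.succ| ≤ ∑ i, E i ^ 2 + ∑ i, B j i ^ 2 := by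
    rw [energyCurrent, Fin.cons_succ, Finset.mul_sum, ← Finset.sum_add_distrib]
    refine (Finset.abs_sum_le_sum_abs _ _).trans (Finset.sum_le_sum fun i _ => abs_le.2 ?_)
    constructor <;> nlinarith [sq_nonneg (E i + B j i), sq_nonneg (E i - B j i)]
  calc ∑ j, |energyCurrent E B j.succ| ≤ ∑ j : Fin n, (∑ i, E i ^ 2 + ∑ i, B j i ^ 2) :=
        Finset.sum_le_sum fun j _ => hflux j
    _ = n * ∑ i, E i ^ 2 + ∑ j, ∑ i, B j i ^ 2 := by simp [Finset.sum_add_distrib]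
    _ ≤ (n + 2) * energyCurrent E B 0 := by
      have hE : 0 ≤ ∑ i, E i ^ 2 := by positivity
      have hB : 0 ≤ n * ∑ j, ∑ i, B j i ^ 2 := by positivity
      rw [energyCurrent, Fin.cons_zero, energyDensity]
      linarith

theorem sum_mul_sub_swap_of_antisymm {ι : Type*} [Fintype ι] {B : ι → ι → ℝ}
    (hB : ∀ i j, B i j = -B j i) (A : ι → ι → ℝ) :
    ∑ i, ∑ j, B i j * (A i j - A j i) = 2 * ∑ i, ∑ j, B i j * A i j := by
  have hswap : ∑ i, ∑ j, B i j * A j i = -∑ i, ∑ j, B i j * A i j := by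
    rw [Finset.sum_comm]
    simp_rw [← Finset.sum_neg_distrib, ← neg_mul, ← hB]
  simp only [mul_sub, Finset.sum_sub_distrib, hswap]
  ring

namespace IsMaxwellSolution

variable {E : (Fin (n + 1) → ℝ) → Fin n → ℝ} {B : (Fin (n + 1) → ℝ) → Fin n → Fin n → ℝ}

theorem contDiff_energyCurrent (h : IsMaxwellSolution E B) :
    ContDiff ℝ 1 fun p => energyCurrent (E p) (B p) := by
  have hE := h.contDiff_electric
  have hB := h.contDiff_magnetic
  refine contDiff_pi.2 (Fin.cases ?_ fun j => ?_)
  · simp only [energyCurrent, energyDensity, Fin.cons_zero]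
    fun_prop
  · simp only [energyCurrent, Fin.cons_succ]
    fun_prop

theorem partialDeriv_energyDensity (h : IsMaxwellSolution E B) (p : Fin (n + 1) → ℝ) :
    partialDeriv (fun q => energyDensity (E q) (B q)) 0 p =
      2 * ∑ j : Fin n, ∑ i, (E p i * partialDeriv (fun q => B q j i) j.succ p +
        partialDeriv (fun q => E q i) j.succ p * B p j i) := by
  have hE := h.contDiff_electric.differentiable one_ne_zero
  have hB := h.contDiff_magnetic.differentiable one_ne_zero
  have hmagnetic := sum_mul_sub_swap_of_antisymm (h.antisymm p)
    fun i j => partialDeriv (fun q => E q j) i.succ p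
  have helectric : ∑ i, E p i * ∑ j : Fin n, partialDeriv (fun q => B q j i) j.succ p =
      ∑ j : Fin n, ∑ i, E p i * partialDeriv (fun q => B q j i) j.succ p := by
    simp only [Finset.mul_sum]
    exact Finset.sum_comm
  have hmagnetic_sq (i : Fin n) : partialDeriv (fun q => ∑ j, B q i j ^ 2) 0 p =
      2 * ∑ j, B p i j * partialDeriv (fun q => B q i j) 0 p :=
    partialDeriv_sum_sq fun j _ => by fun_prop
  calc partialDeriv (fun q => energyDensity (E q) (B q)) 0 p
      = 2 * ∑ i, E p i * partialDeriv (fun q => E q i) 0 p +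
          ∑ i, ∑ j, B p i j * partialDeriv (fun q => B q i j) 0 p := by
        unfold energyDensity
        rw [partialDeriv_add (by fun_prop) (by fun_prop), partialDeriv_const_mul _ (by fun_prop),
          partialDeriv_sum_sq fun i _ => by fun_prop, partialDeriv_sum fun i _ => by fun_prop]
        simp only [hmagnetic_sq, ← Finset.mul_sum]
        ring
    _ = _ := by
        simp only [h.ampere, h.faraday]
        rw [helectric, hmagnetic]
        simp only [Finset.sum_add_distrib, mul_add, mul_comm (B p _ _)]

theorem divergence_energyCurrent (h : IsMaxwellSolution E B) (p : Fin (n + 1) → ℝ) :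
    divergence (fun q => energyCurrent (E q) (B q)) p = 0 := by
  have hE := h.contDiff_electric.differentiable one_ne_zero
  have hB := h.contDiff_magnetic.differentiable one_ne_zero
  have hflux (j : Fin n) : partialDeriv (fun q => -2 * ∑ i, E q i * B q j i) j.succ p =
      -2 * ∑ i, (E p i * partialDeriv (fun q => B q j i) j.succ p +
        partialDeriv (fun q => E q i) j.succ p * B p j i) := by
    rw [partialDeriv_const_mul _ (by fun_prop),
      partialDeriv_sum_mul (fun i _ => by fun_prop) fun i _ => by fun_prop]
  simp only [divergence, Fin.sum_univ_succ, energyCurrent, Fin.cons_zero, Fin.cons_succ, hflux,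
    h.partialDeriv_energyDensity, ← Finset.mul_sum]
  ring

theorem continuous_energyDensity (h : IsMaxwellSolution E B) :
    Continuous fun p => energyDensity (E p) (B p) :=
  (contDiff_pi.1 h.contDiff_energyCurrent 0).continuous

theorem integral_energyDensity_eq (h : IsMaxwellSolution E B) {t₀ t₁ : ℝ}
    (hs₀ : HasCompactSupport fun x : Fin n → ℝ =>
      energyDensity (E (Fin.cons t₀ x)) (B (Fin.cons t₀ x)))
    (hs₁ : HasCompactSupport fun x : Fin n → ℝ =>
      energyDensity (E (Fin.cons t₁ x)) (B (Fin.cons t₁ x))) :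
    ∫ x : Fin n → ℝ, energyDensity (E (Fin.cons t₀ x)) (B (Fin.cons t₀ x)) =
      ∫ x : Fin n → ℝ, energyDensity (E (Fin.cons t₁ x)) (B (Fin.cons t₁ x)) :=
  integral_slice_eq_of_causal (J := fun p => energyCurrent (E p) (B p)) h.contDiff_energyCurrent
    h.divergence_energyCurrent (fun p => sum_abs_energyCurrent_succ_le (E p) (B p)) hs₀ hs₁

end IsMaxwellSolution

end Maxwell

section BelRobinson

theorem sum_eta_mul (μ : Fin 4) (f : Fin 4 → ℝ) : ∑ ν, eta μ ν * f ν = eta μ μ * f μ := by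
  simp [eta]

theorem sum_eta_self_mul (f : Fin 4 → ℝ) :
    ∑ μ, eta μ μ * f μ = -f 0 + ∑ i : Fin 3, f i.succ := by
  simp [Fin.sum_univ_succ, eta]

section Tensor

variable {W : Fin 4 → Fin 4 → Fin 4 → Fin 4 → ℝ}

/-- The electromagnetic energy density of the `2`-form `W_{··γδ}`, in which the last two indices of
`W` are parameters. -/
noncomputable def pairEnergyDensity (W : Fin 4 → Fin 4 → Fin 4 → Fin 4 → ℝ) (γ δ : Fin 4) : ℝ :=
  energyDensity (fun i => W 0 i.succ γ δ) fun i j => W i.succ j.succ γ δ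

theorem pairEnergyDensity_zero (γ δ : Fin 4) : pairEnergyDensity 0 γ δ = 0 := by
  simp [pairEnergyDensity, energyDensity]

theorem hodge_self (W : Fin 4 → Fin 4 → Fin 4 → Fin 4 → ℝ) (α γ δ : Fin 4) :
    hodge W α α γ δ = 0 := by
  simp [hodge, eps4]

theorem hodge_apply_self (hW : ∀ α β γ δ, W α β γ δ = -W α β δ γ) (α β γ : Fin 4) :
    hodge W α β γ γ = 0 := by
  simp [hodge, fun μ ν => self_eq_neg.1 (hW μ ν γ γ)]

theorem hodge_zero (W : Fin 4 → Fin 4 → Fin 4 → Fin 4 → ℝ) (β γ δ : Fin 4) :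
    hodge W 0 β γ δ = 1 / 2 * ∑ j : Fin 3, ∑ k : Fin 3,
      eps4 0 β j.succ k.succ * W j.succ k.succ γ δ := by
  simp [hodge, eta, eps4, Fin.sum_univ_succ]

theorem sum_sq_hodge_zero_succ (hW : ∀ α β γ δ, W α β γ δ = -W β α γ δ) (γ δ : Fin 4) :
    ∑ i : Fin 3, hodge W 0 i.succ γ δ ^ 2 =
      1 / 2 * ∑ i : Fin 3, ∑ j : Fin 3, W i.succ j.succ γ δ ^ 2 := by
  have hdiag (α) : W α α γ δ = 0 := self_eq_neg.1 (hW α α γ δ)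
  have hthree : Fin.succ (2 : Fin 3) = 3 := rfl
  have h₁ : hodge W 0 1 γ δ = W 2 3 γ δ := by
    norm_num [hodge_zero, Fin.sum_univ_three, hthree, eps4, hW 3 2, ← two_mul, ← mul_assoc]
  have h₂ : hodge W 0 2 γ δ = W 3 1 γ δ := by
    norm_num [hodge_zero, Fin.sum_univ_three, hthree, eps4, hW 1 3, ← two_mul, ← mul_assoc]
  have h₃ : hodge W 0 3 γ δ = W 1 2 γ δ := by
    norm_num [hodge_zero, Fin.sum_univ_three, hthree, eps4, hW 2 1, ← two_mul, ← mul_assoc]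
  simp only [Fin.sum_univ_three, Fin.succ_zero_eq_one, Fin.succ_one_eq_two, hthree,
    h₁, h₂, h₃, hdiag, hW 2 1, hW 3 2, hW 1 3]
  ring

theorem belRobinson_zero_zero_zero_zero (h₁ : ∀ α β γ δ, W α β γ δ = -W β α γ δ)
    (h₂ : ∀ α β γ δ, W α β γ δ = -W α β δ γ) :
    belRobinson W 0 0 0 0 = ∑ k : Fin 3, pairEnergyDensity W 0 k.succ := by
  have hzero₁ (γ δ) : W 0 0 γ δ = 0 := self_eq_neg.1 (h₁ 0 0 γ δ)
  have hzero₂ (α β) : W α β 0 0 = 0 := self_eq_neg.1 (h₂ α β 0 0)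
  calc belRobinson W 0 0 0 0
      = ∑ μ, eta μ μ * ∑ ν, eta ν ν * (W 0 μ 0 ν ^ 2 + hodge W 0 μ 0 ν ^ 2) := by
        simp only [belRobinson, mul_assoc, ← Finset.mul_sum, sum_eta_mul, sq]
    _ = ∑ i : Fin 3, ∑ k : Fin 3, (W 0 i.succ 0 k.succ ^ 2 + hodge W 0 i.succ 0 k.succ ^ 2) := by
        simp [sum_eta_self_mul, hodge_self, hodge_apply_self h₂, hzero₁, hzero₂]
    _ = _ := by
        rw [Finset.sum_comm]
        simp only [pairEnergyDensity, energyDensity, Finset.sum_add_distrib,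
          sum_sq_hodge_zero_succ h₁]

end Tensor

variable {W : (Fin 4 → ℝ) → Fin 4 → Fin 4 → Fin 4 → Fin 4 → ℝ}

theorem isMaxwellSolution_of_bianchi
    (hC1 : ∀ α β γ δ : Fin 4, ContDiff ℝ 1 fun p => W p α β γ δ)
    (hAnti : ∀ p α β γ δ, W p α β γ δ = -W p β α γ δ)
    (hBianchiDiv : ∀ (p : Fin 4 → ℝ) (β γ δ : Fin 4),
      ∑ α, ∑ μ, eta α μ * pd4 (fun q => W q α β γ δ) μ p = 0)
    (hBianchiFull : ∀ (p : Fin 4 → ℝ) (l α β γ δ : Fin 4),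
      pd4 (fun q => W q α β γ δ) l p + pd4 (fun q => W q β l γ δ) α p +
        pd4 (fun q => W q l α γ δ) β p = 0) (γ δ : Fin 4) :
    IsMaxwellSolution (fun p i => W p 0 i.succ γ δ) fun p i j => W p i.succ j.succ γ δ where
  contDiff_electric := by fun_prop
  contDiff_magnetic := by fun_prop
  antisymm p i j := hAnti p i.succ j.succ γ δ
  ampere p i := by
    have := hBianchiDiv p i.succ γ δ
    simp only [sum_eta_mul, sum_eta_self_mul] at this
    exact neg_add_eq_zero.1 this
  faraday p i j := by
    have hneg : pd4 (fun q => W q j.succ 0 γ δ) i.succ p =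
        -pd4 (fun q => W q 0 j.succ γ δ) i.succ p := by
      simp only [hAnti _ j.succ 0]
      exact partialDeriv_neg
    have := hBianchiFull p 0 i.succ j.succ γ δ
    rw [hneg] at this
    simp only [pd4, partialDeriv] at this ⊢
    linarith

theorem belRobinson_energy_conservation_general
    (hC1 : ∀ α β γ δ : Fin 4, ContDiff ℝ 1 fun p => W p α β γ δ)
    (hAnti₁ : ∀ p α β γ δ, W p α β γ δ = -W p β α γ δ)
    (hAnti₂ : ∀ p α β γ δ, W p α β γ δ = -W p α β δ γ)
    (hBianchiDiv : ∀ (p : Fin 4 → ℝ) (β γ δ : Fin 4),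
      ∑ α, ∑ μ, eta α μ * pd4 (fun q => W q α β γ δ) μ p = 0)
    (hBianchiFull : ∀ (p : Fin 4 → ℝ) (l α β γ δ : Fin 4),
      pd4 (fun q => W q α β γ δ) l p + pd4 (fun q => W q β l γ δ) α p +
        pd4 (fun q => W q l α γ δ) β p = 0)
    {t₁ t₂ : ℝ} (hs₁ : HasCompactSupport fun x : Fin 3 → ℝ => W (Fin.cons t₁ x))
    (hs₂ : HasCompactSupport fun x : Fin 3 → ℝ => W (Fin.cons t₂ x)) :
    (∫ x : Fin 3 → ℝ, belRobinson (W (Fin.cons t₁ x)) 0 0 0 0) =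
      ∫ x : Fin 3 → ℝ, belRobinson (W (Fin.cons t₂ x)) 0 0 0 0 := by
  have hMaxwell (k : Fin 3) :=
    isMaxwellSolution_of_bianchi hC1 hAnti₁ hBianchiDiv hBianchiFull 0 k.succ
  have hsupp {t : ℝ} (hs : HasCompactSupport fun x : Fin 3 → ℝ => W (Fin.cons t x)) (k : Fin 3) :
      HasCompactSupport fun x : Fin 3 → ℝ => pairEnergyDensity (W (Fin.cons t x)) 0 k.succ :=
    hs.comp_left (g := fun w => pairEnergyDensity w 0 k.succ) (pairEnergyDensity_zero 0 k.succ)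
  have hcons (t : ℝ) : Continuous fun x : Fin 3 → ℝ => (Fin.cons t x : Fin 4 → ℝ) := by fun_prop
  have hint {t : ℝ} (hs : HasCompactSupport fun x : Fin 3 → ℝ => W (Fin.cons t x)) (k : Fin 3) :
      Integrable fun x : Fin 3 → ℝ => pairEnergyDensity (W (Fin.cons t x)) 0 k.succ :=
    ((hMaxwell k).continuous_energyDensity.comp (hcons t)).integrable_of_hasCompactSupport
      (hsupp hs k)
  simp only [belRobinson_zero_zero_zero_zero (hAnti₁ _) (hAnti₂ _)]
  rw [integral_finsetSum _ fun k _ => hint hs₁ k, integral_finsetSum _ fun k _ => hint hs₂ k]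
  exact Finset.sum_congr rfl fun k _ =>
    (hMaxwell k).integral_energyDensity_eq (hsupp hs₁ k) (hsupp hs₂ k)

end BelRobinson

/-- Conservation of the total Bel-Robinson energy: for a smooth Weyl field on `ℝ⁴`
satisfying the vacuum Bianchi equations, with compact spatial support on each time
slice, the energy `ℰ(t) = ∫_{ℝ³} Q_{0000}(t,x) dx` is independent of `t`. -/
theorem belRobinson_energy_conservation
    (W : (Fin 4 → ℝ) → Fin 4 → Fin 4 → Fin 4 → Fin 4 → ℝ)
    (hSmooth : ∀ α β γ δ : Fin 4, ContDiff ℝ (⊤ : ℕ∞) fun p => W p α β γ δ)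
    (hWeyl : ∀ p, IsWeylTensor (W p))
    (hBianchiDiv : ∀ (p : Fin 4 → ℝ) (β γ δ : Fin 4),
      ∑ α, ∑ μ, eta α μ * pd4 (fun q => W q α β γ δ) μ p = 0)
    (hBianchiFull : ∀ (p : Fin 4 → ℝ) (l α β γ δ : Fin 4),
      pd4 (fun q => W q α β γ δ) l p + pd4 (fun q => W q β l γ δ) α p +
        pd4 (fun q => W q l α γ δ) β p = 0)
    (hSupp : ∀ t : ℝ, HasCompactSupport fun x : Fin 3 → ℝ => W (Fin.cons t x)) :
    ∀ t₁ t₂ : ℝ,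
      (∫ x : Fin 3 → ℝ, belRobinson (W (Fin.cons t₁ x)) 0 0 0 0) =
        ∫ x : Fin 3 → ℝ, belRobinson (W (Fin.cons t₂ x)) 0 0 0 0 :=
  fun t₁ t₂ => belRobinson_energy_conservation_general
    (fun α β γ δ => (hSmooth α β γ δ).of_le (by exact_mod_cast le_top)) (fun p => (hWeyl p).1)
    (fun p => (hWeyl p).2.1) hBianchiDiv hBianchiFull (hSupp t₁) (hSupp t₂)
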